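/- Let 1/3 < λ < 1, ξ ∈ ℝ, b, σ ∈ C_b²(ℝ;ℝ) with inf σ > 0, and for g ∈ C^λ₀([0,1];ℝ) let x_·(ξ,g) be the Doss–Sussmann solution; set W = σb' − σ'b. If h : [0,1] → ℝ is Lipschitz continuous with h(0) = 0, then for every t ∈ [0,1] the directional derivative ∇_h x_t(ξ,g) := lim_{ε→0} (x_t(ξ,g+εh) − x_t(ξ,g))/ε exists and equals σ(x_t(ξ,g))·∫₀^t exp(∫_s^t (W/σ)(x_u(ξ,g)) du)·h'(s) ds, where h' is the almost-everywhere defined derivative of the Lipschitz function h. -/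

import Mathlib

/-- `f` is in `C_b^n(ℝ;ℝ)`. -/
def CbN (n : ℕ) (f : ℝ → ℝ) : Prop :=
  ContDiff ℝ n f ∧ ∀ i ≤ n, ∃ M : ℝ, ∀ x : ℝ, |iteratedDeriv i f x| ≤ M

/-- `f_{σ,b}(x,y) = exp(−∫₀^y σ'(φ(x,η))dη) · b(φ(x,y))`. -/
noncomputable def fsb (b σ : ℝ → ℝ) (φ : ℝ → ℝ → ℝ) (x y : ℝ) : ℝ :=
  Real.exp (-(∫ η in (0:ℝ)..y, deriv σ (φ x η))) * b (φ x y)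

/-- The Wronskian-type function `W = σb' − σ'b`. -/
noncomputable def Wf (b σ : ℝ → ℝ) (x : ℝ) : ℝ := σ x * deriv b x - deriv σ x * b x

open MeasureTheory Set Filter Topology

theorem continuous_of_eq_add_integral_comp {σ f : ℝ → ℝ} {M α : ℝ} (hσ : Continuous σ)
    (hc : ∀ x, 0 < σ x) (hM : ∀ x, |σ x| ≤ M)
    (hf : ∀ β, f β = α + ∫ η in (0:ℝ)..β, σ (f η)) : Continuous f := by
  set S : Set ℝ := {β | IntervalIntegrable (fun η => σ (f η)) volume 0 β}
  have hSconn : S.OrdConnected := by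
    refine ⟨fun x hx y hy z hz => ?_⟩
    have hxy : IntervalIntegrable (fun η => σ (f η)) volume x y := hx.symm.trans hy
    refine IntervalIntegrable.trans hx (hxy.mono_set ?_)
    exact uIcc_subset_uIcc left_mem_uIcc (Icc_subset_uIcc hz)
  have hmono : MonotoneOn f S := by
    intro x hx y hy hxy
    have hint := intervalIntegral.integral_add_adjacent_intervals hx (hx.symm.trans hy)
    have hnn : 0 ≤ ∫ η in x..y, σ (f η) :=
      intervalIntegral.integral_nonneg hxy fun u _ => (hc _).le
    rw [hf x, hf y]
    linarith
  have hmeas : AEMeasurable f volume := by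
    have hSm : MeasurableSet S := hSconn.measurableSet
    have h1 : AEMeasurable f (volume.restrict S) :=
      aemeasurable_restrict_of_monotoneOn hSm hmono
    have h2 : AEMeasurable f (volume.restrict Sᶜ) := by
      refine (aemeasurable_const (b := α)).congr ?_
      filter_upwards [ae_restrict_mem hSm.compl] with x hx
      rw [hf x, intervalIntegral.integral_undef hx, add_zero]
    have := aemeasurable_union_iff.2 ⟨h1, h2⟩
    rwa [union_compl_self, Measure.restrict_univ] at this
  have hint : ∀ x y, IntervalIntegrable (fun η => σ (f η)) volume x y := by
    intro x y
    refine (intervalIntegrable_const (c := M)).mono_fun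
      (hσ.measurable.comp_aemeasurable hmeas).aestronglyMeasurable.restrict ?_
    filter_upwards with z
    simpa using (hM (f z)).trans (le_abs_self M)
  have : f = fun β => α + ∫ η in (0:ℝ)..β, σ (f η) := funext hf
  rw [this]
  exact continuous_const.add (intervalIntegral.continuous_primitive hint 0)

theorem hasDerivAt_of_eq_add_integral {f k : ℝ → ℝ} {α : ℝ} (hk : Continuous k)
    (hf : ∀ β, f β = α + ∫ η in (0:ℝ)..β, k η) (β : ℝ) : HasDerivAt f (k β) β := by
  have : f = fun β => α + ∫ η in (0:ℝ)..β, k η := funext hf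
  rw [this]
  exact (hk.integral_hasStrictDerivAt 0 β).hasDerivAt.const_add α

/-- The solution `v` of the linear integral equation `v t = h t + ∫₀ᵗ q s * v s ds`. -/
noncomputable def linearResponse (q h : ℝ → ℝ) (t : ℝ) : ℝ :=
  h t + Real.exp (∫ u in (0:ℝ)..t, q u) *
    ∫ s in (0:ℝ)..t, q s * h s * Real.exp (-∫ u in (0:ℝ)..s, q u)

/-- Integration by parts rewrites the variation-of-constants integral as `linearResponse`. -/
theorem integral_exp_mul_deriv_of_lipschitzOnWith {q h : ℝ → ℝ} {K : NNReal} {t : ℝ}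
    (hq : Continuous q) (ht : t ∈ Icc (0:ℝ) 1)
    (hh : LipschitzOnWith K h (Icc 0 1)) (hh0 : h 0 = 0) :
    ∫ s in (0:ℝ)..t, Real.exp (∫ u in s..t, q u) * deriv h s =
      linearResponse q h t := by
  unfold linearResponse
  have hQ : ∀ s, HasDerivAt (fun s => ∫ u in (0:ℝ)..s, q u) (q s) s := fun s =>
    (hq.integral_hasStrictDerivAt 0 s).hasDerivAt
  have hE : ∀ s, HasDerivAt (fun s => Real.exp (-∫ u in (0:ℝ)..s, q u))
      (Real.exp (-∫ u in (0:ℝ)..s, q u) * -q s) s := fun s => (hQ s).neg.exp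
  have hEd : deriv (fun s => Real.exp (-∫ u in (0:ℝ)..s, q u)) =
      fun s => Real.exp (-∫ u in (0:ℝ)..s, q u) * -q s := funext fun s => (hE s).deriv
  have hEc : ContDiff ℝ 1 fun s => Real.exp (-∫ u in (0:ℝ)..s, q u) := by
    rw [contDiff_one_iff_deriv, hEd]
    have : Continuous fun s => Real.exp (-∫ u in (0:ℝ)..s, q u) :=
      continuous_iff_continuousAt.2 fun s => (hE s).continuousAt
    exact ⟨fun s => (hE s).differentiableAt, this.mul hq.neg⟩
  have hhac : AbsolutelyContinuousOnInterval h 0 t := by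
    refine (hh.mono ?_).absolutelyContinuousOnInterval
    rw [uIcc_of_le ht.1]
    exact Icc_subset_Icc_right ht.2
  have key := (hEc.contDiffOn (s := uIcc 0 t)).absolutelyContinuousOnInterval
    |>.integral_mul_deriv_eq_deriv_mul hhac
  rw [hEd, hh0] at key
  have hsplit : ∀ s, Real.exp (∫ u in s..t, q u) * deriv h s = Real.exp (∫ u in (0:ℝ)..t, q u) *
      (Real.exp (-∫ u in (0:ℝ)..s, q u) * deriv h s) := by
    intro s
    rw [← intervalIntegral.integral_add_adjacent_intervals (hq.intervalIntegrable 0 s)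
      (hq.intervalIntegrable s t), Real.exp_add, Real.exp_neg]
    field_simp
  simp_rw [hsplit]
  rw [intervalIntegral.integral_const_mul, key, mul_sub, mul_sub, ← mul_assoc, ← Real.exp_add]
  have hneg : ∀ s, Real.exp (-∫ u in (0:ℝ)..s, q u) * -q s * h s =
      -(q s * h s * Real.exp (-∫ u in (0:ℝ)..s, q u)) := fun s => by ring
  simp_rw [hneg]
  rw [intervalIntegral.integral_neg]
  simp

/-- The average of a derivative over the segment between `x` and `y`, that is, the slope of its
primitive there. -/
noncomputable def meanSlope (F' : ℝ → ℝ) (x y : ℝ) : ℝ := ∫ θ in (0:ℝ)..1, F' (x + θ * (y - x))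

theorem continuous_meanSlope {F' : ℝ → ℝ} (hF' : Continuous F') :
    Continuous fun p : ℝ × ℝ => meanSlope F' p.1 p.2 := by
  unfold meanSlope
  apply intervalIntegral.continuous_parametric_intervalIntegral_of_continuous'
  fun_prop

theorem abs_meanSlope_le {F' : ℝ → ℝ} {L : ℝ} (hL : ∀ x, |F' x| ≤ L) (x y : ℝ) :
    |meanSlope F' x y| ≤ L := by
  have := intervalIntegral.norm_integral_le_of_norm_le_const (a := 0) (b := 1) (C := L)
    (f := fun θ => F' (x + θ * (y - x))) fun θ _ => hL _
  simpa [meanSlope] using this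

theorem meanSlope_self (F' : ℝ → ℝ) (x : ℝ) : meanSlope F' x x = F' x := by
  simp [meanSlope]

theorem meanSlope_mul_sub {F F' : ℝ → ℝ} (hF : ∀ x, HasDerivAt F (F' x) x) (hF' : Continuous F')
    (x y : ℝ) : meanSlope F' x y * (y - x) = F y - F x := by
  have hd : ∀ θ ∈ uIcc (0:ℝ) 1, HasDerivAt (fun θ : ℝ => F (x + θ * (y - x)))
      (F' (x + θ * (y - x)) * (y - x)) θ := by
    intro θ _
    have h1 : HasDerivAt (fun θ : ℝ => x + θ * (y - x)) (y - x) θ := by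
      simpa using ((hasDerivAt_id θ).mul_const (y - x)).const_add x
    exact (hF _).comp θ h1
  have := intervalIntegral.integral_eq_sub_of_hasDerivAt hd
    (Continuous.intervalIntegrable (by fun_prop) _ _)
  rw [intervalIntegral.integral_mul_const] at this
  simpa [meanSlope] using this

theorem abs_integral_le_of_mem_Icc {q : ℝ → ℝ} {L s : ℝ} (hL : ∀ u, |q u| ≤ L)
    (hs : s ∈ Icc (0:ℝ) 1) : |∫ u in (0:ℝ)..s, q u| ≤ L := by
  have h1 := intervalIntegral.norm_integral_le_of_norm_le_const (a := 0) (b := s) (C := L)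
    (f := q) fun u _ => hL u
  have hL0 : 0 ≤ L := (abs_nonneg _).trans (hL 0)
  rw [Real.norm_eq_abs, sub_zero, abs_of_nonneg hs.1] at h1
  exact h1.trans (mul_le_of_le_one_right hL0 hs.2)

theorem abs_linearResponse_integrand_le {q h : ℝ → ℝ} {L H s : ℝ} (hL : ∀ u, |q u| ≤ L)
    (hH : ∀ u, |h u| ≤ H) (hs : s ∈ Icc (0:ℝ) 1) :
    |q s * h s * Real.exp (-∫ u in (0:ℝ)..s, q u)| ≤ L * H * Real.exp L := by
  have hL0 : 0 ≤ L := (abs_nonneg _).trans (hL 0)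
  have hH0 : 0 ≤ H := (abs_nonneg _).trans (hH 0)
  rw [abs_mul, abs_mul, Real.abs_exp]
  gcongr
  · exact hL s
  · exact hH s
  · exact (neg_le_abs _).trans (abs_integral_le_of_mem_Icc hL hs)

theorem abs_linearResponse_le {q h : ℝ → ℝ} {L H t : ℝ} (hL : ∀ u, |q u| ≤ L)
    (hH : ∀ u, |h u| ≤ H) (ht : t ∈ Icc (0:ℝ) 1) :
    |linearResponse q h t| ≤ H + Real.exp L * (L * H * Real.exp L) := by
  have hL0 : 0 ≤ L := (abs_nonneg _).trans (hL 0)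
  have hH0 : 0 ≤ H := (abs_nonneg _).trans (hH 0)
  have h1 := intervalIntegral.norm_integral_le_of_norm_le_const (a := 0) (b := t)
    (C := L * H * Real.exp L) (f := fun s => q s * h s * Real.exp (-∫ u in (0:ℝ)..s, q u))
    fun s hs => abs_linearResponse_integrand_le hL hH (by
      rw [uIoc_of_le ht.1] at hs
      exact ⟨hs.1.le, hs.2.trans ht.2⟩)
  rw [Real.norm_eq_abs, sub_zero, abs_of_nonneg ht.1] at h1
  have h2 := h1.trans (mul_le_of_le_one_right (by positivity) ht.2)
  refine (abs_add_le _ _).trans (add_le_add (hH t) ?_)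
  rw [abs_mul, Real.abs_exp]
  gcongr
  exact (le_abs_self _).trans (abs_integral_le_of_mem_Icc hL ht)

theorem continuousAt_integral_of_bounded {q : ℝ → ℝ → ℝ} {B t x₀ : ℝ}
    (ht : t ∈ Icc (0:ℝ) 1) (hq : ∀ x, Continuous (q x))
    (hB : ∀ x, ∀ s ∈ Icc (0:ℝ) 1, |q x s| ≤ B)
    (hx₀ : ∀ s ∈ Icc (0:ℝ) 1, ContinuousAt (fun x => q x s) x₀) :
    ContinuousAt (fun x => ∫ s in (0:ℝ)..t, q x s) x₀ := by
  have hmem : ∀ s ∈ uIoc 0 t, s ∈ Icc (0:ℝ) 1 := fun s hs => by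
    rw [uIoc_of_le ht.1] at hs
    exact ⟨hs.1.le, hs.2.trans ht.2⟩
  refine intervalIntegral.continuousAt_of_dominated_interval (bound := fun _ => B)
    (.of_forall fun x => (hq x).aestronglyMeasurable)
    (.of_forall fun x => .of_forall fun s hs => hB x s (hmem s hs))
    intervalIntegrable_const (.of_forall fun s hs => hx₀ s (hmem s hs))

theorem continuousAt_linearResponse {q : ℝ → ℝ → ℝ} {h : ℝ → ℝ} {L H t x₀ : ℝ}
    (ht : t ∈ Icc (0:ℝ) 1) (hq : ∀ x, Continuous (q x)) (hL : ∀ x u, |q x u| ≤ L)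
    (hh : Continuous h) (hH : ∀ u, |h u| ≤ H)
    (hx₀ : ∀ s ∈ Icc (0:ℝ) 1, ContinuousAt (fun x => q x s) x₀) :
    ContinuousAt (fun x => linearResponse (q x) h t) x₀ := by
  have hQ : ∀ s ∈ Icc (0:ℝ) 1, ContinuousAt (fun x => ∫ u in (0:ℝ)..s, q x u) x₀ := fun s hs =>
    continuousAt_integral_of_bounded hs hq (fun x u _ => hL x u) hx₀
  refine continuousAt_const.add ((hQ t ht).rexp.mul ?_)
  refine continuousAt_integral_of_bounded ht (fun x => ?_)
    (fun x s hs => abs_linearResponse_integrand_le (hL x) hH hs)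
    fun s hs => ((hx₀ s hs).mul continuousAt_const).mul (hQ s hs).neg.rexp
  have := intervalIntegral.continuous_primitive (μ := volume)
    (fun a b => (hq x).intervalIntegrable a b) 0
  have := hq x
  fun_prop

/-- Uniqueness for the linear integral equation `v t = ε * h t + ∫₀ᵗ q s * v s ds` on `[0, 1]`. -/
theorem eq_mul_linearResponse {q h v : ℝ → ℝ} {ε : ℝ} (hq : Continuous q) (hv : Continuous v)
    (hvh : ∀ t ∈ Icc (0:ℝ) 1, v t = ε * h t + ∫ s in (0:ℝ)..t, q s * v s)
    {t : ℝ} (ht : t ∈ Icc (0:ℝ) 1) : v t = ε * linearResponse q h t := by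
  have hQ : ∀ s, HasDerivAt (fun s => ∫ u in (0:ℝ)..s, q u) (q s) s := fun s =>
    (hq.integral_hasStrictDerivAt 0 s).hasDerivAt
  have hqv : Continuous fun s => q s * v s := hq.mul hv
  have hI : ∀ s, HasDerivAt (fun s => ∫ u in (0:ℝ)..s, q u * v u) (q s * v s) s := fun s =>
    (hqv.integral_hasStrictDerivAt 0 s).hasDerivAt
  have hQc : Continuous fun s => ∫ u in (0:ℝ)..s, q u :=
    continuous_iff_continuousAt.2 fun s => (hQ s).continuousAt
  have hIc : Continuous fun s => ∫ u in (0:ℝ)..s, q u * v u :=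
    continuous_iff_continuousAt.2 fun s => (hI s).continuousAt
  have hftc := intervalIntegral.integral_eq_sub_of_hasDerivAt (a := 0) (b := t)
    (fun s _ => (hI s).mul (hQ s).neg.exp) (Continuous.intervalIntegrable (by fun_prop) _ _)
  have hcongr : ∫ s in (0:ℝ)..t, (q s * v s * Real.exp (-∫ u in (0:ℝ)..s, q u) +
      (∫ u in (0:ℝ)..s, q u * v u) * (Real.exp (-∫ u in (0:ℝ)..s, q u) * -q s)) =
      ∫ s in (0:ℝ)..t, ε * (q s * h s * Real.exp (-∫ u in (0:ℝ)..s, q u)) := by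
    refine intervalIntegral.integral_congr fun s hs => ?_
    rw [uIcc_of_le ht.1] at hs
    rw [hvh s ⟨hs.1, hs.2.trans ht.2⟩]
    ring
  simp only [Pi.neg_apply, Pi.mul_apply, intervalIntegral.integral_same, zero_mul, sub_zero] at hftc
  rw [hcongr, intervalIntegral.integral_const_mul] at hftc
  have hexp : Real.exp (∫ u in (0:ℝ)..t, q u) * Real.exp (-∫ u in (0:ℝ)..t, q u) = 1 := by
    rw [← Real.exp_add, add_neg_cancel, Real.exp_zero]
  rw [hvh t ht, linearResponse]
  linear_combination (-Real.exp (∫ u in (0:ℝ)..t, q u)) * hftc -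
    (∫ s in (0:ℝ)..t, q s * v s) * hexp

/-- Differentiability in the parameter `ε` of the solution of an additively perturbed
integral equation. -/
theorem hasDerivAt_of_additive_perturbation {F F' p h : ℝ → ℝ} {Y : ℝ → ℝ → ℝ} {L H : ℝ}
    (hF : ∀ x, HasDerivAt F (F' x) x) (hF' : Continuous F') (hL : ∀ x, |F' x| ≤ L)
    (hh : Continuous h) (hH : ∀ u, |h u| ≤ H) (hYc : ∀ ε, Continuous (Y ε))
    (hY : ∀ ε, ∀ t ∈ Icc (0:ℝ) 1, Y ε t = p t + ε * h t + ∫ u in (0:ℝ)..t, F (Y ε u))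
    {t : ℝ} (ht : t ∈ Icc (0:ℝ) 1) :
    HasDerivAt (fun ε => Y ε t) (linearResponse (fun u => F' (Y 0 u)) h t) 0 := by
  set q : ℝ → ℝ → ℝ := fun ε u => meanSlope F' (Y 0 u) (Y ε u) with hq
  have hFc : Continuous F := continuous_iff_continuousAt.2 fun x => (hF x).continuousAt
  have hqc : ∀ ε, Continuous (q ε) := fun ε =>
    (continuous_meanSlope hF').comp ((hYc 0).prodMk (hYc ε))
  have hqL : ∀ ε u, |q ε u| ≤ L := fun ε u => abs_meanSlope_le hL _ _
  have hdiff : ∀ ε, ∀ s ∈ Icc (0:ℝ) 1, Y ε s - Y 0 s = ε * linearResponse (q ε) h s := by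
    intro ε s hs
    refine eq_mul_linearResponse (v := fun s => Y ε s - Y 0 s) (hqc ε) ((hYc ε).sub (hYc 0))
      (fun r hr => ?_) hs
    simp only [hq, meanSlope_mul_sub hF hF']
    have hint : ∀ δ, IntervalIntegrable (fun s => F (Y δ s)) volume 0 r := fun δ =>
      (hFc.comp (hYc δ)).intervalIntegrable _ _
    rw [intervalIntegral.integral_sub (hint ε) (hint 0), hY ε r hr, hY 0 r hr]
    ring
  have hYcont : ∀ s ∈ Icc (0:ℝ) 1, ContinuousAt (fun ε => Y ε s) 0 := by
    intro s hs
    rw [ContinuousAt, tendsto_iff_norm_sub_tendsto_zero]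
    refine squeeze_zero (g := fun ε => |ε| * (H + Real.exp L * (L * H * Real.exp L)))
      (fun ε => norm_nonneg _) (fun ε => ?_) ?_
    · rw [hdiff ε s hs, Real.norm_eq_abs, abs_mul]
      gcongr
      exact abs_linearResponse_le (hqL ε) hH hs
    · have : Continuous fun ε : ℝ => |ε| * (H + Real.exp L * (L * H * Real.exp L)) := by fun_prop
      simpa using this.tendsto 0
  have hV : ContinuousAt (fun ε => linearResponse (q ε) h t) 0 := by
    refine continuousAt_linearResponse ht hqc hqL hh hH fun s hs => ?_
    exact ContinuousAt.comp (g := fun p : ℝ × ℝ => meanSlope F' p.1 p.2)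
      (continuous_meanSlope hF').continuousAt (continuousAt_const.prodMk (hYcont s hs))
  have hq0 : q 0 = fun u => F' (Y 0 u) := funext fun u => meanSlope_self F' _
  rw [hasDerivAt_iff_tendsto_slope, ← hq0]
  refine (hV.tendsto.mono_left nhdsWithin_le_nhds).congr' ?_
  filter_upwards [self_mem_nhdsWithin] with ε hε
  have hε0 : ε ≠ 0 := hε
  rw [slope_def_field, hdiff ε t ht, sub_zero, mul_div_cancel_left₀ _ hε0]

/-- The Lamperti transform `G x = ∫₀ˣ 1 / σ`. -/
noncomputable def lamperti (σ : ℝ → ℝ) (x : ℝ) : ℝ := ∫ u in (0:ℝ)..x, (σ u)⁻¹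

theorem hasDerivAt_lamperti {σ : ℝ → ℝ} (hσ : Continuous σ) (hpos : ∀ x, 0 < σ x) (x : ℝ) :
    HasDerivAt (lamperti σ) (σ x)⁻¹ x :=
  ((hσ.inv₀ fun x => (hpos x).ne').integral_hasStrictDerivAt 0 x).hasDerivAt

theorem strictMono_lamperti {σ : ℝ → ℝ} (hσ : Continuous σ) (hpos : ∀ x, 0 < σ x) :
    StrictMono (lamperti σ) :=
  strictMono_of_deriv_pos fun x => by
    rw [(hasDerivAt_lamperti hσ hpos x).deriv]
    exact inv_pos.2 (hpos x)

theorem continuous_lamperti {σ : ℝ → ℝ} (hσ : Continuous σ) (hpos : ∀ x, 0 < σ x) :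
    Continuous (lamperti σ) :=
  continuous_iff_continuousAt.2 fun x => (hasDerivAt_lamperti hσ hpos x).continuousAt

section Flow

variable {σ : ℝ → ℝ} {φ : ℝ → ℝ → ℝ}

theorem lamperti_flow (hσ : Continuous σ) (hpos : ∀ x, 0 < σ x) (hφ0 : ∀ α, φ α 0 = α)
    (hφ : ∀ α β, HasDerivAt (φ α) (σ (φ α β)) β) (α β : ℝ) :
    lamperti σ (φ α β) = lamperti σ α + β := by
  have hd : ∀ η ∈ uIcc 0 β, HasDerivAt (fun η => lamperti σ (φ α η)) 1 η := fun η _ => by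
    have := (hasDerivAt_lamperti hσ hpos (φ α η)).comp η (hφ α η)
    rwa [inv_mul_cancel₀ (hpos _).ne'] at this
  have := intervalIntegral.integral_eq_sub_of_hasDerivAt hd intervalIntegrable_const
  simp only [intervalIntegral.integral_const, sub_zero, smul_eq_mul, mul_one, hφ0] at this
  linarith

theorem flow_eq_flow_zero (hσ : Continuous σ) (hpos : ∀ x, 0 < σ x) (hφ0 : ∀ α, φ α 0 = α)
    (hφ : ∀ α β, HasDerivAt (φ α) (σ (φ α β)) β) (α β : ℝ) :
    φ α β = φ 0 (lamperti σ α + β) := by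
  apply (strictMono_lamperti hσ hpos).injective
  rw [lamperti_flow hσ hpos hφ0 hφ, lamperti_flow hσ hpos hφ0 hφ]
  simp [lamperti]

theorem fsb_eq {b : ℝ → ℝ} (hσ : Differentiable ℝ σ) (hσ' : Continuous (deriv σ))
    (hpos : ∀ x, 0 < σ x) (hφ0 : ∀ α, φ α 0 = α)
    (hφ : ∀ α β, HasDerivAt (φ α) (σ (φ α β)) β) (x y : ℝ) :
    fsb b σ φ x y = σ x * (b (φ x y) / σ (φ x y)) := by
  have hφc : Continuous (φ x) := continuous_iff_continuousAt.2 fun η => (hφ x η).continuousAt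
  have hd : ∀ η ∈ uIcc 0 y, HasDerivAt (fun η => Real.log (σ (φ x η))) (deriv σ (φ x η)) η := by
    intro η _
    have := ((hσ (φ x η)).hasDerivAt.comp η (hφ x η)).log (hpos (φ x η)).ne'
    rwa [Function.comp_apply, mul_div_cancel_right₀ _ (hpos _).ne'] at this
  have hint := intervalIntegral.integral_eq_sub_of_hasDerivAt hd
    ((hσ'.comp hφc).intervalIntegrable _ _)
  rw [fsb, hint, hφ0, neg_sub, Real.exp_sub, Real.exp_log (hpos _), Real.exp_log (hpos _)]
  ring

end Flow

theorem ContinuousOn.exists_continuous_bounded_extension {f : ℝ → ℝ}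
    (hf : ContinuousOn f (Icc 0 1)) :
    ∃ f' : ℝ → ℝ, Continuous f' ∧ (∀ t ∈ Icc (0:ℝ) 1, f' t = f t) ∧ ∃ H, ∀ u, |f' u| ≤ H := by
  obtain ⟨H, hH⟩ := isCompact_Icc.exists_bound_of_continuousOn hf
  refine ⟨fun t => f (projIcc 0 1 zero_le_one t), ?_, fun t ht => ?_, H, fun u => ?_⟩
  · exact hf.comp_continuous (continuous_subtype_val.comp continuous_projIcc)
      fun t => Subtype.coe_prop _
  · simp [projIcc_of_mem zero_le_one ht]
  · exact hH _ (Subtype.coe_prop _)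

/-- In the Lamperti coordinate, an equation with multiplicative coefficient `σ` becomes
additive. -/
theorem lamperti_eq_add_integral {σ F a g : ℝ → ℝ} {ξ : ℝ} (hσ : Continuous σ)
    (hpos : ∀ x, 0 < σ x) (hF : Continuous F) (ha : ContinuousOn a (Icc 0 1))
    (hg : ContinuousOn g (Icc 0 1))
    (hag : ∀ t ∈ Icc (0:ℝ) 1,
      a t = ξ + ∫ u in (0:ℝ)..t, σ (a u) * F (lamperti σ (a u) + g u))
    {t : ℝ} (ht : t ∈ Icc (0:ℝ) 1) :
    lamperti σ (a t) = lamperti σ ξ + ∫ u in (0:ℝ)..t, F (lamperti σ (a u) + g u) := by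
  obtain ⟨a', ha'c, ha', -⟩ := ha.exists_continuous_bounded_extension
  obtain ⟨g', hg'c, hg', -⟩ := hg.exists_continuous_bounded_extension
  have hGc := continuous_lamperti hσ hpos
  have hmem : ∀ {r u : ℝ}, r ∈ Icc (0:ℝ) 1 → u ∈ uIcc 0 r → u ∈ Icc (0:ℝ) 1 := fun hr hu => by
    rw [uIcc_of_le hr.1] at hu
    exact ⟨hu.1, hu.2.trans hr.2⟩
  set k : ℝ → ℝ := fun u => F (lamperti σ (a' u) + g' u) with hk
  have hkc : Continuous k := by fun_prop
  set α : ℝ → ℝ := fun r => ξ + ∫ u in (0:ℝ)..r, σ (a' u) * k u with hα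
  have hαd : ∀ r, HasDerivAt α (σ (a' r) * k r) r :=
    hasDerivAt_of_eq_add_integral (by fun_prop) fun _ => rfl
  have hαa : ∀ r ∈ Icc (0:ℝ) 1, α r = a r := by
    intro r hr
    rw [hag r hr]
    refine congrArg (ξ + ·) (intervalIntegral.integral_congr fun u hu => ?_)
    simp only [hk, ha' u (hmem hr hu), hg' u (hmem hr hu)]
  have hd : ∀ r ∈ uIcc 0 t, HasDerivAt (fun r => lamperti σ (α r)) (k r) r := by
    intro r hr
    have := (hasDerivAt_lamperti hσ hpos (α r)).comp r (hαd r)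
    rw [ha' r (hmem ht hr), ← hαa r (hmem ht hr)] at this
    rwa [inv_mul_cancel_left₀ (hpos _).ne'] at this
  have hftc := intervalIntegral.integral_eq_sub_of_hasDerivAt hd (hkc.intervalIntegrable _ _)
  have hcongr : ∫ u in (0:ℝ)..t, F (lamperti σ (a u) + g u) = ∫ u in (0:ℝ)..t, k u :=
    intervalIntegral.integral_congr fun u hu => by
      simp only [hk, ha' u (hmem ht hu), hg' u (hmem ht hu)]
  rw [hcongr, hftc, hαa t ht]
  simp [hα]

theorem continuousOn_of_holder {g : ℝ → ℝ} {s : Set ℝ} {C lam : ℝ} (hlam : 0 < lam)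
    (hg : ∀ x ∈ s, ∀ y ∈ s, |g y - g x| ≤ C * |y - x| ^ lam) : ContinuousOn g s := by
  intro x hx
  rw [ContinuousWithinAt, tendsto_iff_norm_sub_tendsto_zero]
  have hc : Continuous fun y => C * |y - x| ^ lam :=
    continuous_const.mul ((by fun_prop : Continuous fun y => |y - x|).rpow_const
      fun _ => Or.inr hlam.le)
  refine squeeze_zero' (.of_forall fun _ => norm_nonneg _) ?_
    (by simpa [hlam.ne'] using (hc.tendsto x).mono_left nhdsWithin_le_nhds)
  filter_upwards [self_mem_nhdsWithin] with y hy
  exact hg x hx y hy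

theorem CbN.continuous_deriv {n : ℕ} {f : ℝ → ℝ} (hf : CbN n f) (hn : 1 ≤ n) :
    Continuous (deriv f) :=
  hf.1.continuous_deriv (mod_cast hn)

theorem CbN.differentiable {n : ℕ} {f : ℝ → ℝ} (hf : CbN n f) (hn : 1 ≤ n) :
    Differentiable ℝ f :=
  hf.1.differentiable (by exact_mod_cast (Nat.one_le_iff_ne_zero.1 hn))

theorem abs_Wf_div_le {b σ : ℝ → ℝ} {c B B' S' : ℝ} (hc : 0 < c) (hσc : ∀ x, c ≤ σ x)
    (hB : ∀ x, |b x| ≤ B) (hB' : ∀ x, |deriv b x| ≤ B') (hS' : ∀ x, |deriv σ x| ≤ S') (x : ℝ) :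
    |Wf b σ x / σ x| ≤ B' + S' * B / c := by
  have hσ : 0 < σ x := hc.trans_le (hσc x)
  have hB0 : 0 ≤ B := (abs_nonneg _).trans (hB 0)
  have hS0 : 0 ≤ S' := (abs_nonneg _).trans (hS' 0)
  have heq : Wf b σ x / σ x = deriv b x - deriv σ x * b x / σ x := by
    rw [Wf]
    field_simp
  rw [heq]
  refine (abs_sub _ _).trans (add_le_add (hB' x) ?_)
  rw [abs_div, abs_mul, abs_of_pos hσ]
  gcongr
  · exact hS' x
  · exact hB x
  · exact hσc x

theorem stmt12
    (lam : ℝ) (hlam1 : 1/3 < lam) (hlam2 : lam < 1)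
    (ξ : ℝ) (b σ : ℝ → ℝ) (hb : CbN 2 b) (hσ : CbN 2 σ)
    (hσpos : ∃ c : ℝ, 0 < c ∧ ∀ x : ℝ, c ≤ σ x)
    (φ : ℝ → ℝ → ℝ) (hφ : ∀ α β : ℝ, φ α β = α + ∫ η in (0:ℝ)..β, σ (φ α η))
    -- `A g` is the Doss–Sussmann auxiliary path for the driver `g`, so that
    -- `x_t(ξ,g) = φ(A g t, g t)`
    (A : (ℝ → ℝ) → ℝ → ℝ)
    (hA : ∀ g : ℝ → ℝ, ContinuousOn g (Set.Icc 0 1) → g 0 = 0 →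
      ContinuousOn (A g) (Set.Icc 0 1) ∧
      ∀ t ∈ Set.Icc (0:ℝ) 1, A g t = ξ + ∫ u in (0:ℝ)..t, fsb b σ φ (A g u) (g u))
    (g : ℝ → ℝ)
    (hg : ∃ Cg : ℝ, ∀ s ∈ Set.Icc (0:ℝ) 1, ∀ t ∈ Set.Icc (0:ℝ) 1,
      |g t - g s| ≤ Cg * |t - s| ^ lam)
    (hg0 : g 0 = 0)
    (h : ℝ → ℝ) (K : NNReal) (hh : LipschitzOnWith K h (Set.Icc 0 1)) (hh0 : h 0 = 0) :
    ∀ t ∈ Set.Icc (0:ℝ) 1,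
      HasDerivAt (fun ε : ℝ => φ (A (fun u => g u + ε * h u) t) (g t + ε * h t))
        (σ (φ (A g t) (g t))
          * ∫ s in (0:ℝ)..t,
              Real.exp (∫ u in s..t,
                Wf b σ (φ (A g u) (g u)) / σ (φ (A g u) (g u))) * deriv h s) 0 := by
  intro t ht
  obtain ⟨c, hc, hσc⟩ := hσpos
  obtain ⟨C, hC⟩ := hg
  obtain ⟨S, hS⟩ := hσ.2 0 (by norm_num)
  obtain ⟨S', hS'⟩ := hσ.2 1 (by norm_num)
  obtain ⟨B, hB⟩ := hb.2 0 (by norm_num)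
  obtain ⟨B', hB'⟩ := hb.2 1 (by norm_num)
  simp only [iteratedDeriv_zero, iteratedDeriv_one] at hS hS' hB hB'
  have hpos : ∀ x, 0 < σ x := fun x => hc.trans_le (hσc x)
  have hσd := hσ.differentiable one_le_two
  have hbd := hb.differentiable one_le_two
  have hσ' := hσ.continuous_deriv one_le_two
  have hb' := hb.continuous_deriv one_le_two
  have hσcont := hσd.continuous
  have hbcont := hbd.continuous
  have hφc : ∀ α, Continuous (φ α) := fun α =>
    continuous_of_eq_add_integral_comp hσcont hpos hS (hφ α)
  have hφd : ∀ α β, HasDerivAt (φ α) (σ (φ α β)) β := fun α β =>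
    hasDerivAt_of_eq_add_integral (hσcont.comp (hφc α)) (hφ α) β
  have hφ0 : ∀ α, φ α 0 = α := fun α => by simpa using hφ α 0
  have hflow := flow_eq_flow_zero hσcont hpos hφ0 hφd
  -- the drift and its derivative in the Lamperti coordinate
  set F : ℝ → ℝ := fun y => b (φ 0 y) / σ (φ 0 y) with hFdef
  set F' : ℝ → ℝ := fun y => Wf b σ (φ 0 y) / σ (φ 0 y) with hF'def
  have hF : ∀ y, HasDerivAt F (F' y) y := by
    intro y
    have h1 := ((hbd (φ 0 y)).hasDerivAt.comp y (hφd 0 y)).div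
      ((hσd (φ 0 y)).hasDerivAt.comp y (hφd 0 y)) (hpos _).ne'
    refine h1.congr_deriv ?_
    have := (hpos (φ 0 y)).ne'
    simp only [hF'def, Wf, Function.comp_apply]
    field_simp
  have hFc : Continuous F := continuous_iff_continuousAt.2 fun y => (hF y).continuousAt
  have hφ0c := hφc 0
  have hF'c : Continuous F' := by
    simp only [hF'def, Wf]
    exact Continuous.div (by fun_prop) (by fun_prop) fun y => (hpos _).ne'
  have hF'L : ∀ y, |F' y| ≤ B' + S' * B / c := fun y => abs_Wf_div_le hc hσc hB hB' hS' _
  have hgc : ContinuousOn g (Icc 0 1) := continuousOn_of_holder (by linarith) hC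
  have hhc : ContinuousOn h (Icc 0 1) := hh.continuousOn
  have hGc := continuous_lamperti hσcont hpos
  have hgε : ∀ ε : ℝ, ContinuousOn (fun u => g u + ε * h u) (Icc 0 1) := fun ε =>
    hgc.add (continuousOn_const.mul hhc)
  have hAε := fun ε : ℝ => hA (fun u => g u + ε * h u) (hgε ε) (by simp [hg0, hh0])
  -- the solutions in the Lamperti coordinate, extended from `[0, 1]` to `ℝ`
  have hYex := fun ε : ℝ => ContinuousOn.exists_continuous_bounded_extension
    ((hGc.comp_continuousOn (hAε ε).1).add (hgε ε))
  choose Y hYc hYeq _ using hYex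
  obtain ⟨k, hkc, hkh, H, hH⟩ := hhc.exists_continuous_bounded_extension
  have hmem : ∀ {r u : ℝ}, r ∈ Icc (0:ℝ) 1 → u ∈ uIcc 0 r → u ∈ Icc (0:ℝ) 1 := fun hr hu => by
    rw [uIcc_of_le hr.1] at hu
    exact ⟨hu.1, hu.2.trans hr.2⟩
  have hφY : ∀ ε, ∀ r ∈ Icc (0:ℝ) 1,
      φ (A (fun u => g u + ε * h u) r) (g r + ε * h r) = φ 0 (Y ε r) := fun ε r hr => by
    rw [hflow, hYeq ε r hr]
    rfl
  have hφY0 : ∀ r ∈ Icc (0:ℝ) 1, φ (A g r) (g r) = φ 0 (Y 0 r) := fun r hr => by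
    simpa using hφY 0 r hr
  have hY : ∀ ε, ∀ r ∈ Icc (0:ℝ) 1,
      Y ε r = (lamperti σ ξ + g r) + ε * k r + ∫ u in (0:ℝ)..r, F (Y ε u) := by
    intro ε r hr
    have hlam := lamperti_eq_add_integral (ξ := ξ) hσcont hpos hFc (hAε ε).1 (hgε ε)
      (fun s hs => by
        rw [(hAε ε).2 s hs]
        simp only [fsb_eq hσd hσ' hpos hφ0 hφd, hFdef, ← hflow]) hr
    have hcongr : ∫ u in (0:ℝ)..r, F (Y ε u) = ∫ u in (0:ℝ)..r,
        F (lamperti σ (A (fun u => g u + ε * h u) u) + (g u + ε * h u)) :=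
      intervalIntegral.integral_congr fun u hu => by
        simp only [hYeq ε u (hmem hr hu)]
        rfl
    rw [hcongr, hYeq ε r hr, hkh r hr]
    simp only [Pi.add_apply, Function.comp_apply, hlam]
    ring
  have hder := hasDerivAt_of_additive_perturbation hF hF'c hF'L hkc hH hYc hY ht
  have hresp : linearResponse (fun u => F' (Y 0 u)) k t = ∫ s in (0:ℝ)..t,
      Real.exp (∫ u in s..t, Wf b σ (φ (A g u) (g u)) / σ (φ (A g u) (g u))) * deriv h s := by
    have hkresp : linearResponse (fun u => F' (Y 0 u)) k t =
        linearResponse (fun u => F' (Y 0 u)) h t := by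
      rw [linearResponse, linearResponse, hkh t ht]
      congr 2
      refine intervalIntegral.integral_congr fun s hs => ?_
      simp only [hkh s (hmem ht hs)]
    rw [hkresp, ← integral_exp_mul_deriv_of_lipschitzOnWith
      (q := fun u => F' (Y 0 u)) (hF'c.comp (hYc 0)) ht hh hh0]
    refine intervalIntegral.integral_congr fun s hs => ?_
    have : ∫ u in s..t, F' (Y 0 u) =
        ∫ u in s..t, Wf b σ (φ (A g u) (g u)) / σ (φ (A g u) (g u)) :=
      intervalIntegral.integral_congr fun u hu => by
        simp only [hF'def, hφY0 u (hmem ht (uIcc_subset_uIcc hs right_mem_uIcc hu))]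
    simp only [this]
  rw [← hresp, hφY0 t ht]
  have hfun : (fun ε : ℝ => φ (A (fun u => g u + ε * h u) t) (g t + ε * h t)) =
      fun ε => φ 0 (Y ε t) := funext fun ε => hφY ε t ht
  rw [hfun]
  exact (hφd 0 (Y 0 t)).comp 0 hder
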